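/- arXiv:math/0309097 — 2 statements merged into one kernel-verified Lean document; each statement's English description precedes it below -/
import Mathlib

section
/- Let ψ₁, ψ₂, φ₁, φ₂ be smooth complex functions with φ₁, φ₂ nowhere zero, satisfying the generalised CP² Weierstrass system (equations (4.1)–(4.4) of Grundland–Zakrzewski). Then the functions w₁ = ψ₁/φ̄₁ and w₂ = ψ₂/φ̄₂ satisfy ∂w₁ = A[w₁w̄₂φ₂² + (1+|w₁|²)φ₁²] and ∂w₂ = A[w̄₁w₂φ₁² + (1+|w₂|²)φ₂²], where A = 1 + |w₁|² + |w₂|². -/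
open Complex ComplexConjugate

/-- The Wirtinger derivative `∂ = ∂/∂z`. -/
noncomputable def wdz (f : ℂ → ℂ) (z : ℂ) : ℂ :=
  (1 / 2 : ℂ) * (fderiv ℝ f z 1 - I * fderiv ℝ f z I)

/-- The Wirtinger derivative `∂̄ = ∂/∂z̄`. -/
noncomputable def wdzbar (f : ℂ → ℂ) (z : ℂ) : ℂ :=
  (1 / 2 : ℂ) * (fderiv ℝ f z 1 + I * fderiv ℝ f z I)

lemma wdz_div_conj (f g : ℂ → ℂ) (z : ℂ) (hf : DifferentiableAt ℝ f z)
    (hg : DifferentiableAt ℝ g z) (h0 : g z ≠ 0) :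
    wdz (fun x => f x / conj (g x)) z =
      wdz f z / conj (g z) - f z * conj (wdzbar g z) / conj (g z) ^ 2 := by
  have hc0 : conj (g z) ≠ 0 := by simpa using h0
  have hgc : HasFDerivAt (fun x => conj (g x))
      ((conjCLE : ℂ →L[ℝ] ℂ).comp (fderiv ℝ g z)) z :=
    (conjCLE : ℂ →L[ℝ] ℂ).hasFDerivAt.comp z hg.hasFDerivAt
  have key : ∀ v, fderiv ℝ (fun x => f x / conj (g x)) z v =
      fderiv ℝ f z v / conj (g z) - f z * conj (fderiv ℝ g z v) / conj (g z) ^ 2 := by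
    intro v
    have hd : DifferentiableAt ℝ (fun x => f x / conj (g x)) z := by
      simp only [div_eq_mul_inv]
      exact hf.mul (hgc.differentiableAt.inv hc0)
    have hm := hd.hasFDerivAt.mul hgc
    have he : (fun x => f x / conj (g x)) * (fun x => conj (g x)) =ᶠ[nhds z] f := by
      filter_upwards [hg.continuousAt.eventually_ne h0] with x hx
      have : conj (g x) ≠ 0 := by simpa using hx
      simp [this]
    have h2 := congrArg (fun L => L v)
      ((hm.congr_of_eventuallyEq he.symm).unique hf.hasFDerivAt)
    simp at h2
    rw [← h2]
    field_simp
    ring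
  unfold wdz wdzbar
  rw [key, key]
  simp only [map_mul, map_add, conj_I, map_div₀, map_one, map_ofNat]
  field_simp
  ring

/-- The pointwise algebra, with conjugates as independent variables. -/
lemma cp2_alg (f F g G a b c d p q : ℂ) (hf : f ≠ 0) (hF : F ≠ 0) (hg : g ≠ 0) (hG : G ≠ 0)
    (hq : q = a * d * g / F + (f * F + a * b) * f / F) :
    ((1 + c * d / (g * G)) * F * q
        - (1 / 2 : ℂ) * (a * d / g + a * b / (f * F) * (G ^ 2 / F)) * p) / F
      - a * (-(1 / 2 : ℂ) * ((d / g * p + 2 * (b / f) * q) * F + p * b * G ^ 2 / (f * F))) / F ^ 2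
    = (1 + a / F * (b / f) + c / G * (d / g)) *
      (a / F * (d / g) * g ^ 2 + (1 + a / F * (b / f)) * f ^ 2) := by
  have hq' : a / F * (d / g) * g ^ 2 + (1 + a / F * (b / f)) * f ^ 2 = q := by
    rw [hq]; field_simp
  rw [hq']
  field_simp
  ring

/-- If `(ψ₁, ψ₂, φ₁, φ₂)` solve the generalised `CP²` Weierstrass system
(4.1)–(4.5) of Grundland–Zakrzewski, then `w₁ = ψ₁/φ̄₁`, `w₂ = ψ₂/φ̄₂` satisfy
`∂w₁ = A[w₁w̄₂φ₂² + (1+|w₁|²)φ₁²]` and `∂w₂ = A[w̄₁w₂φ₁² + (1+|w₂|²)φ₂²]`,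
where `A = 1 + |w₁|² + |w₂|²`. -/
theorem cp2_gw_to_w_derivatives (s : Set ℂ) (hs : IsOpen s)
    (ψ₁ ψ₂ φ₁ φ₂ : ℂ → ℂ)
    (hψ₁ : ContDiffOn ℝ (⊤ : ℕ∞) ψ₁ s) (hψ₂ : ContDiffOn ℝ (⊤ : ℕ∞) ψ₂ s)
    (hφ₁ : ContDiffOn ℝ (⊤ : ℕ∞) φ₁ s) (hφ₂ : ContDiffOn ℝ (⊤ : ℕ∞) φ₂ s)
    (hφ₁ne : ∀ z ∈ s, φ₁ z ≠ 0) (hφ₂ne : ∀ z ∈ s, φ₂ z ≠ 0)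
    (P Q : ℂ → ℂ)
    (hP : ∀ z, P z = ψ₁ z * conj (ψ₂ z) * conj (φ₁ z) / φ₂ z
      + (((normSq (φ₂ z) : ℝ) : ℂ) + ((normSq (ψ₂ z) : ℝ) : ℂ)) * conj (φ₂ z) / φ₂ z)
    (hQ : ∀ z, Q z = conj (ψ₁ z) * ψ₂ z * conj (φ₂ z) / φ₁ z
      + (((normSq (φ₁ z) : ℝ) : ℂ) + ((normSq (ψ₁ z) : ℝ) : ℂ)) * conj (φ₁ z) / φ₁ z)
    (h1 : ∀ z ∈ s, wdz ψ₁ z =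
      (1 + ((normSq (ψ₂ z) : ℝ) : ℂ) / ((normSq (φ₂ z) : ℝ) : ℂ)) * conj (φ₁ z) * conj (Q z)
        - (1 / 2 : ℂ) * (ψ₁ z * conj (ψ₂ z) / φ₂ z
            + ((normSq (ψ₁ z) : ℝ) : ℂ) / ((normSq (φ₁ z) : ℝ) : ℂ)
              * (conj (φ₂ z) ^ 2 / conj (φ₁ z))) * conj (P z))
    (h2 : ∀ z ∈ s, wdz ψ₂ z =
      (1 + ((normSq (ψ₁ z) : ℝ) : ℂ) / ((normSq (φ₁ z) : ℝ) : ℂ)) * conj (φ₂ z) * conj (P z)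
        - (1 / 2 : ℂ) * (conj (ψ₁ z) * ψ₂ z / φ₁ z
            + ((normSq (ψ₂ z) : ℝ) : ℂ) / ((normSq (φ₂ z) : ℝ) : ℂ)
              * (conj (φ₁ z) ^ 2 / conj (φ₂ z))) * conj (Q z))
    (h3 : ∀ z ∈ s, wdzbar φ₁ z =
      -(1 / 2 : ℂ) * ((ψ₂ z / conj (φ₂ z) * P z + 2 * (ψ₁ z / conj (φ₁ z)) * Q z) * φ₁ z
        + P z * ψ₁ z * φ₂ z ^ 2 / ((normSq (φ₁ z) : ℝ) : ℂ)))
    (h4 : ∀ z ∈ s, wdzbar φ₂ z =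
      -(1 / 2 : ℂ) * ((ψ₁ z / conj (φ₁ z) * Q z + 2 * (ψ₂ z / conj (φ₂ z)) * P z) * φ₂ z
        + Q z * ψ₂ z * φ₁ z ^ 2 / ((normSq (φ₂ z) : ℝ) : ℂ)))
    (w₁ w₂ A : ℂ → ℂ)
    (hw₁ : ∀ z, w₁ z = ψ₁ z / conj (φ₁ z)) (hw₂ : ∀ z, w₂ z = ψ₂ z / conj (φ₂ z))
    (hA : ∀ z, A z = 1 + ((normSq (w₁ z) : ℝ) : ℂ) + ((normSq (w₂ z) : ℝ) : ℂ)) :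
    ∀ z ∈ s,
      wdz w₁ z = A z * (w₁ z * conj (w₂ z) * φ₂ z ^ 2
          + (1 + ((normSq (w₁ z) : ℝ) : ℂ)) * φ₁ z ^ 2) ∧
      wdz w₂ z = A z * (conj (w₁ z) * w₂ z * φ₁ z ^ 2
          + (1 + ((normSq (w₂ z) : ℝ) : ℂ)) * φ₂ z ^ 2) := by
  intro z hz
  have hn := hs.mem_nhds hz
  have dψ₁ := (hψ₁.contDiffAt hn).differentiableAt (by simp)
  have dψ₂ := (hψ₂.contDiffAt hn).differentiableAt (by simp)
  have dφ₁ := (hφ₁.contDiffAt hn).differentiableAt (by simp)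
  have dφ₂ := (hφ₂.contDiffAt hn).differentiableAt (by simp)
  have n1 := hφ₁ne z hz
  have n2 := hφ₂ne z hz
  have m1 : conj (φ₁ z) ≠ 0 := by simpa using n1
  have m2 : conj (φ₂ z) ≠ 0 := by simpa using n2
  have e1 : w₁ = fun x => ψ₁ x / conj (φ₁ x) := funext hw₁
  have e2 : w₂ = fun x => ψ₂ x / conj (φ₂ x) := funext hw₂
  have hq : conj (Q z) = ψ₁ z * conj (ψ₂ z) * φ₂ z / conj (φ₁ z)
      + (φ₁ z * conj (φ₁ z) + ψ₁ z * conj (ψ₁ z)) * φ₁ z / conj (φ₁ z) := by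
    rw [hQ]
    simp only [← mul_conj]
    simp only [map_add, map_mul, map_div₀, conj_conj]
    ring
  have hp : conj (P z) = ψ₂ z * conj (ψ₁ z) * φ₁ z / conj (φ₂ z)
      + (φ₂ z * conj (φ₂ z) + ψ₂ z * conj (ψ₂ z)) * φ₂ z / conj (φ₂ z) := by
    rw [hP]
    simp only [← mul_conj]
    simp only [map_add, map_mul, map_div₀, conj_conj]
    ring
  have a1 := cp2_alg (φ₁ z) (conj (φ₁ z)) (φ₂ z) (conj (φ₂ z)) (ψ₁ z) (conj (ψ₁ z))
    (ψ₂ z) (conj (ψ₂ z)) (conj (P z)) (conj (Q z)) n1 m1 n2 m2 hq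
  have a2 := cp2_alg (φ₂ z) (conj (φ₂ z)) (φ₁ z) (conj (φ₁ z)) (ψ₂ z) (conj (ψ₂ z))
    (ψ₁ z) (conj (ψ₁ z)) (conj (Q z)) (conj (P z)) n2 m2 n1 m1 hp
  constructor
  · rw [hA, e1, wdz_div_conj _ _ _ dψ₁ dφ₁ n1, h1 z hz, h3 z hz, hw₂]
    simp only [← mul_conj]
    simp only [map_add, map_mul, map_div₀, conj_conj, map_neg, map_one, map_ofNat,
      map_pow]
    refine Eq.trans ?_ (a1.trans ?_) <;> ring
  · rw [hA, e2, wdz_div_conj _ _ _ dψ₂ dφ₂ n2, h2 z hz, h4 z hz, hw₁]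
    simp only [← mul_conj]
    simp only [map_add, map_mul, map_div₀, conj_conj, map_neg, map_one, map_ofNat,
      map_pow]
    refine Eq.trans ?_ (a2.trans ?_) <;> ring
end

section
/- The functions w₁ = (z̄ + z)/(1 − |z|²) and w₂ = (z̄ − z)/(1 − |z|²), defined on the open set {z ∈ ℂ : |z| ≠ 1}, solve the CP² sigma model equations, and satisfy A = 1 + |w₁|² + |w₂|² = ((1 + |z|²)/(1 − |z|²))². -/
open Complex ComplexConjugate

/-- Real differentiability with prescribed Wirtinger derivatives `b = ∂f`, `a = ∂̄f`. -/
def HasW (f : ℂ → ℂ) (b a : ℂ) (z : ℂ) : Prop :=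
  HasFDerivAt f (b • (ContinuousLinearMap.id ℝ ℂ) + a • (conjCLE : ℂ →L[ℝ] ℂ)) z

lemma HasW.wdz_eq {f : ℂ → ℂ} {b a z : ℂ} (h : HasW f b a z) : wdz f z = b := by
  unfold wdz
  rw [HasFDerivAt.fderiv h]
  simp
  linear_combination (-(b - a) / 2) * I_sq

lemma HasW.wdzbar_eq {f : ℂ → ℂ} {b a z : ℂ} (h : HasW f b a z) : wdzbar f z = a := by
  unfold wdzbar
  rw [HasFDerivAt.fderiv h]
  simp
  linear_combination ((b - a) / 2) * I_sq

lemma hasW_id (z : ℂ) : HasW (fun t => t) 1 0 z := by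
  have h := hasFDerivAt_id (𝕜 := ℝ) z
  unfold HasW
  refine HasFDerivAt.congr_fderiv h ?_
  apply ContinuousLinearMap.ext
  intro t
  simp

lemma hasW_conj (z : ℂ) : HasW (fun t => conj t) 0 1 z := by
  have h := (conjCLE : ℂ →L[ℝ] ℂ).hasFDerivAt (x := z)
  unfold HasW
  refine HasFDerivAt.congr_fderiv h ?_
  apply ContinuousLinearMap.ext
  intro t
  simp

lemma hasW_const (c z : ℂ) : HasW (fun _ => c) 0 0 z := by
  have h := hasFDerivAt_const (𝕜 := ℝ) c z
  unfold HasW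
  refine HasFDerivAt.congr_fderiv h ?_
  apply ContinuousLinearMap.ext
  intro t
  simp

lemma HasW.add {f g : ℂ → ℂ} {b a d c z : ℂ} (hf : HasW f b a z) (hg : HasW g d c z) :
    HasW (fun t => f t + g t) (b + d) (a + c) z := by
  have h := HasFDerivAt.add hf hg
  unfold HasW
  refine HasFDerivAt.congr_fderiv h ?_
  apply ContinuousLinearMap.ext
  intro t
  simp
  ring

lemma HasW.sub {f g : ℂ → ℂ} {b a d c z : ℂ} (hf : HasW f b a z) (hg : HasW g d c z) :
    HasW (fun t => f t - g t) (b - d) (a - c) z := by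
  have h := HasFDerivAt.sub hf hg
  unfold HasW
  refine HasFDerivAt.congr_fderiv h ?_
  apply ContinuousLinearMap.ext
  intro t
  simp
  ring

lemma HasW.mul {f g : ℂ → ℂ} {b a d c z : ℂ} (hf : HasW f b a z) (hg : HasW g d c z) :
    HasW (fun t => f t * g t) (b * g z + f z * d) (a * g z + f z * c) z := by
  have h := HasFDerivAt.mul hf hg
  unfold HasW
  refine HasFDerivAt.congr_fderiv h ?_
  apply ContinuousLinearMap.ext
  intro t
  simp
  ring

lemma HasW.inv {f : ℂ → ℂ} {b a z : ℂ} (hf : HasW f b a z) (h0 : f z ≠ 0) :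
    HasW (fun t => (f t)⁻¹) (-b / f z ^ 2) (-a / f z ^ 2) z := by
  have h := ((hasDerivAt_inv h0).hasFDerivAt.restrictScalars ℝ).comp z hf
  unfold HasW
  refine HasFDerivAt.congr_fderiv h ?_
  apply ContinuousLinearMap.ext
  intro t
  simp
  ring

lemma HasW.div {f g : ℂ → ℂ} {b a d c z : ℂ} (hf : HasW f b a z) (hg : HasW g d c z)
    (h0 : g z ≠ 0) :
    HasW (fun t => f t / g t) ((b * g z - f z * d) / g z ^ 2) ((a * g z - f z * c) / g z ^ 2) z := by
  have h := hf.mul (hg.inv h0)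
  simp only [div_eq_mul_inv] at h ⊢
  convert h using 1 <;> field_simp <;> ring

lemma HasW.congr' {f g : ℂ → ℂ} {b a d c z : ℂ} (hf : HasW f b a z)
    (hfg : g =ᶠ[nhds z] f) (hb : b = d) (ha : a = c) : HasW g d c z := by
  subst hb ha
  exact HasFDerivAt.congr_of_eventuallyEq hf hfg

lemma den_ne {z : ℂ} (hz : normSq z ≠ 1) : 1 - conj z * z ≠ 0 := by
  rw [← normSq_eq_conj_mul_self]
  intro h
  apply hz
  have h1 : ((normSq z : ℝ) : ℂ) = ((1 : ℝ) : ℂ) := by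
    push_cast
    linear_combination -h
  exact_mod_cast h1

lemma hasW_den (z : ℂ) : HasW (fun t => 1 - conj t * t) (-conj z) (-z) z :=
  ((hasW_const 1 z).sub ((hasW_conj z).mul (hasW_id z))).congr'
    (Filter.EventuallyEq.refl _ _) (by simp) (by simp)

lemma hasW_w1 {z : ℂ} (hz : normSq z ≠ 1) :
    HasW (fun t => (conj t + t) / (1 - conj t * t))
      ((1 + conj z ^ 2) / (1 - conj z * z) ^ 2) ((1 + z ^ 2) / (1 - conj z * z) ^ 2) z :=
  (((hasW_conj z).add (hasW_id z)).div (hasW_den z) (den_ne hz)).congr'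
    (Filter.EventuallyEq.refl _ _) (by ring) (by ring)

lemma hasW_w2 {z : ℂ} (hz : normSq z ≠ 1) :
    HasW (fun t => (conj t - t) / (1 - conj t * t))
      ((conj z ^ 2 - 1) / (1 - conj z * z) ^ 2) ((1 - z ^ 2) / (1 - conj z * z) ^ 2) z :=
  (((hasW_conj z).sub (hasW_id z)).div (hasW_den z) (den_ne hz)).congr'
    (Filter.EventuallyEq.refl _ _) (by ring) (by ring)

lemma eventually_ne {z : ℂ} (hz : normSq z ≠ 1) : ∀ᶠ t in nhds z, normSq t ≠ 1 :=
  continuous_normSq.continuousAt.eventually_ne hz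

lemma wdz_wdzbar_w1 {z : ℂ} (hz : normSq z ≠ 1) :
    wdz (fun t => wdzbar (fun t => (conj t + t) / (1 - conj t * t)) t) z
      = 2 * (conj z + z) / (1 - conj z * z) ^ 3 := by
  have hD := den_ne hz
  have h := ((hasW_const 1 z).add ((hasW_id z).mul (hasW_id z))).div
    ((hasW_den z).mul (hasW_den z)) (mul_ne_zero hD hD)
  refine (h.congr' (g := fun t => wdzbar (fun t => (conj t + t) / (1 - conj t * t)) t)
    ?_ rfl rfl).wdz_eq.trans ?_
  · filter_upwards [eventually_ne hz] with t ht
    rw [(hasW_w1 ht).wdzbar_eq]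
    ring
  · field_simp
    ring

lemma wdz_wdzbar_w2 {z : ℂ} (hz : normSq z ≠ 1) :
    wdz (fun t => wdzbar (fun t => (conj t - t) / (1 - conj t * t)) t) z
      = 2 * (conj z - z) / (1 - conj z * z) ^ 3 := by
  have hD := den_ne hz
  have h := ((hasW_const 1 z).sub ((hasW_id z).mul (hasW_id z))).div
    ((hasW_den z).mul (hasW_den z)) (mul_ne_zero hD hD)
  refine (h.congr' (g := fun t => wdzbar (fun t => (conj t - t) / (1 - conj t * t)) t)
    ?_ rfl rfl).wdz_eq.trans ?_
  · filter_upwards [eventually_ne hz] with t ht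
    rw [(hasW_w2 ht).wdzbar_eq]
    ring
  · field_simp
    ring

/-- The mixed pair `w₁ = (z̄+z)/(1-|z|²)`, `w₂ = (z̄-z)/(1-|z|²)`, defined for
`|z| ≠ 1`, solves the `CP²` sigma model equations and satisfies
`A = 1 + |w₁|² + |w₂|² = ((1+|z|²)/(1-|z|²))²`. -/
theorem cp2_example_mixed :
    ∀ z : ℂ, normSq z ≠ 1 →
      (let w₁ : ℂ → ℂ := fun t => (conj t + t) / (1 - ((normSq t : ℝ) : ℂ))
       let w₂ : ℂ → ℂ := fun t => (conj t - t) / (1 - ((normSq t : ℝ) : ℂ))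
       let A : ℂ → ℂ := fun t =>
         1 + ((normSq (w₁ t) : ℝ) : ℂ) + ((normSq (w₂ t) : ℝ) : ℂ)
       (wdz (fun t => wdzbar w₁ t) z
          - 2 * conj (w₁ z) / A z * wdz w₁ z * wdzbar w₁ z
          - conj (w₂ z) / A z * (wdz w₁ z * wdzbar w₂ z + wdzbar w₁ z * wdz w₂ z) = 0) ∧
       (wdz (fun t => wdzbar w₂ t) z
          - 2 * conj (w₂ z) / A z * wdz w₂ z * wdzbar w₂ z
          - conj (w₁ z) / A z * (wdz w₁ z * wdzbar w₂ z + wdzbar w₁ z * wdz w₂ z) = 0) ∧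
       A z = ((1 + ((normSq z : ℝ) : ℂ)) / (1 - ((normSq z : ℝ) : ℂ))) ^ 2) := by
  intro z hz
  have hD := den_ne hz
  have hN : 1 + conj z * z ≠ 0 := by
    rw [← normSq_eq_conj_mul_self]
    have h1 : (1 + normSq z : ℝ) ≠ 0 := by
      have := normSq_nonneg z
      positivity
    exact_mod_cast h1
  have hA : 1 + (conj z + z) / (1 - conj z * z) * ((conj z + z) / (1 - conj z * z))
      + (-((conj z - z) / (1 - conj z * z))) * ((conj z - z) / (1 - conj z * z))
      = ((1 + conj z * z) / (1 - conj z * z)) ^ 2 := by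
    field_simp
    ring
  have hc1 : conj ((conj z + z) / (1 - conj z * z)) = (conj z + z) / (1 - conj z * z) := by
    simp only [map_div₀, map_add, map_sub, map_mul, map_one, conj_conj]
    ring
  have hc2 : conj ((conj z - z) / (1 - conj z * z)) = -((conj z - z) / (1 - conj z * z)) := by
    simp only [map_div₀, map_sub, map_mul, map_one, conj_conj]
    ring
  simp only [normSq_eq_conj_mul_self]
  rw [wdz_wdzbar_w1 hz, wdz_wdzbar_w2 hz, (hasW_w1 hz).wdz_eq, (hasW_w1 hz).wdzbar_eq,
    (hasW_w2 hz).wdz_eq, (hasW_w2 hz).wdzbar_eq, hc1, hc2, hA]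
  generalize conj z = s at *
  refine ⟨?_, ?_, rfl⟩
  · field_simp
    ring
  · field_simp
    ring
end
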